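/- arXiv:1002.2594 — 2 statements merged into one kernel-verified Lean document; each statement's English description precedes it below -/
import Mathlib

section
/- In the Cantor tower over F_p with p odd, let i ≥ 1, let Q_i ∈ F_p[Y] be the minimal polynomial of x_i over F_p, and let q_i* ∈ F_p[Y] be the polynomial such that ∏_{j=0}^{2p−2} Q_i(x^j · Y) = q_i*(Y^{2p−1}) in A[Y], where A = F_p[X]/(Φ), Φ is the reduction modulo p of the (2p−1)-th cyclotomic polynomial, and x = X mod Φ. Then the minimal polynomial of x_{i+1} over F_p is q_i*(Y^p − Y). -/
open IntermediateField Polynomial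

/-! Write `Tr y` for the trace of `F_p(y)` over `F_p` applied to `y`, and `n` for `2p - 1`.

If `x^p - x = γ` and `Tr γ ≠ 0`, then `x ↦ x + Tr γ` is a power of Frobenius, the one whose
exponent is `[F_p(γ) : F_p]`. So `x` has degree `p` over `F_p(γ)` and its conjugates there are the
`x + a` with `a ∈ F_p`. Modulo the Artin–Schreier relation `x^n = x + γ + γ x^(p-1)`, so the
conjugates of `x^n` over `F_p(γ)` sum to `-γ`. Hence `γ ∈ F_p(x^n)`, then `F_p(x^n) = F_p(x)` and
`Tr (x^n) = -Tr γ ≠ 0`, and the argument can be repeated one level up. Along the tower the minimal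
polynomial of `x_{i+1}` is therefore that of `x_i^n` composed with `Y^p - Y`, and `q_i*`, being
monic of degree `deg Q_i` and vanishing at `x_i^n`, is the minimal polynomial of `x_i^n`. -/

section RangeSums

theorem sum_range_mul_eq_sum_sum {M : Type*} [AddCommMonoid M] (f : ℕ → M) (m s : ℕ) :
    ∑ k ∈ Finset.range (m * s), f k =
      ∑ r ∈ Finset.range m, ∑ j ∈ Finset.range s, f (r + m * j) := by
  rw [Finset.sum_comm]
  induction s with
  | zero => simp
  | succ s ih =>
    rw [Nat.mul_succ, Finset.sum_range_add, ih, Finset.sum_range_succ]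
    simp_rw [add_comm (m * s)]

theorem prod_range_pow_eq_one_of_odd {M : Type*} [CommMonoid M] {ζ : M} {n : ℕ} (hn : Odd n)
    (hζ : ζ ^ n = 1) : ∏ j ∈ Finset.range n, ζ ^ j = 1 := by
  have hdvd : n ∣ ∑ j ∈ Finset.range n, j :=
    hn.coprime_two_right.dvd_of_dvd_mul_right
      (Finset.sum_range_id_mul_two n ▸ dvd_mul_right n (n - 1))
  obtain ⟨k, hk⟩ := hdvd
  rw [Finset.prod_pow_eq_pow_sum, hk, pow_mul, hζ, one_pow]

end RangeSums

section ProductOfRotations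

theorem isMonicOfDegree_prod_comp_C_pow_mul_X {A : Type*} [CommSemiring A] {ζ : A} {n d : ℕ}
    (hn : Odd n) (hζ : ζ ^ n = 1) {f : A[X]} (hf : IsMonicOfDegree f d) :
    IsMonicOfDegree (∏ j ∈ Finset.range n, f.comp (C (ζ ^ j) * X)) (n * d) := by
  rcases subsingleton_or_nontrivial A with _ | _
  · simp_all [isMonicOfDegree_iff_of_subsingleton]
  obtain ⟨hdeg, hcoeff⟩ := (isMonicOfDegree_iff f d).mp hf
  have hfactor (j : ℕ) : (f.comp (C (ζ ^ j) * X)).natDegree ≤ d :=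
    natDegree_comp_le.trans
      ((Nat.mul_le_mul hdeg ((natDegree_C_mul_le _ _).trans natDegree_X_le)).trans_eq (mul_one d))
  rw [isMonicOfDegree_iff]
  constructor
  · calc _ ≤ ∑ j ∈ Finset.range n, (f.comp (C (ζ ^ j) * X)).natDegree := natDegree_prod_le _ _
      _ ≤ ∑ _j ∈ Finset.range n, d := Finset.sum_le_sum fun j _ ↦ hfactor j
      _ = n * d := by simp
  · have hprod := coeff_prod_of_natDegree_le (Finset.range n) _ d fun j _ ↦ hfactor j
    rw [Finset.card_range] at hprod
    simp_rw [hprod, comp_C_mul_X_coeff, hcoeff, one_mul]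
    rw [Finset.prod_pow, prod_range_pow_eq_one_of_odd hn hζ, one_pow]

variable {R A : Type*} [CommRing R] [CommRing A] [Algebra R A] [FaithfulSMul R A] {ζ : A}
  {n : ℕ} {f q : R[X]}

theorem isMonicOfDegree_of_prod_comp_eq {d : ℕ} (hn : Odd n) (hζ : ζ ^ n = 1)
    (hf : IsMonicOfDegree f d)
    (h : ∏ j ∈ Finset.range n, (f.map (algebraMap R A)).comp (C (ζ ^ j) * X) =
      (q.map (algebraMap R A)).comp (X ^ n)) :
    IsMonicOfDegree q d := by
  have hinj := FaithfulSMul.algebraMap_injective R A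
  have hfA : IsMonicOfDegree (f.map (algebraMap R A)) d :=
    ⟨(natDegree_map_eq_of_injective hinj f).trans hf.natDegree_eq, hf.monic.map _⟩
  have hprod := isMonicOfDegree_prod_comp_C_pow_mul_X hn hζ hfA
  rw [h, ← expand_eq_comp_X_pow, ← map_expand, mul_comm] at hprod
  constructor
  · rw [← Nat.mul_left_inj hn.pos.ne', ← natDegree_expand, ← natDegree_map_eq_of_injective hinj,
      hprod.natDegree_eq]
  · rw [← monic_expand_iff hn.pos, hinj.monic_map_iff]
    exact hprod.monic

theorem dvd_expand_of_prod_comp_eq (hn : 0 < n) (hf : f.Monic)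
    (h : ∏ j ∈ Finset.range n, (f.map (algebraMap R A)).comp (C (ζ ^ j) * X) =
      (q.map (algebraMap R A)).comp (X ^ n)) :
    f ∣ expand R n q := by
  rw [← map_dvd_map (algebraMap R A) (FaithfulSMul.algebraMap_injective R A) hf, map_expand,
    expand_eq_comp_X_pow, ← h]
  have hfactor : (f.map (algebraMap R A)).comp (C (ζ ^ 0) * X) = f.map (algebraMap R A) := by
    rw [pow_zero, C_1, one_mul, comp_X]
  exact hfactor.symm.dvd.trans (Finset.dvd_prod_of_mem
    (fun j ↦ (f.map (algebraMap R A)).comp (C (ζ ^ j) * X)) (Finset.mem_range.mpr hn))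

theorem root_cyclotomic_pow_eq_one (n : ℕ) (R : Type*) [CommRing R] :
    AdjoinRoot.root (cyclotomic n R) ^ n = 1 := by
  have hdvd := AdjoinRoot.mk_eq_zero.mpr (cyclotomic.dvd_X_pow_sub_one n R)
  simpa [sub_eq_zero] using hdvd

end ProductOfRotations

section Minpoly

variable {F K : Type*} [Field F] [Field K] [Algebra F K] {y : K} {q : F[X]}

theorem minpoly_eq_of_monic_of_natDegree_le (hq : q.Monic) (hroot : aeval y q = 0)
    (hdeg : q.natDegree ≤ (minpoly F y).natDegree) : minpoly F y = q :=
  (eq_of_monic_of_dvd_of_natDegree_le (minpoly.monic ⟨q, hq, hroot⟩) hq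
    (minpoly.dvd F y hroot) hdeg).symm

theorem minpoly_pow_eq_of_prod_comp_eq {A : Type*} [CommRing A] [Nontrivial A] [Algebra F A]
    {ζ : A} {n : ℕ} (hn : Odd n) (hζ : ζ ^ n = 1) (hy : IsIntegral F y)
    (hdeg : (minpoly F (y ^ n)).natDegree = (minpoly F y).natDegree)
    (h : ∏ j ∈ Finset.range n, ((minpoly F y).map (algebraMap F A)).comp (C (ζ ^ j) * X) =
      (q.map (algebraMap F A)).comp (X ^ n)) :
    minpoly F (y ^ n) = q := by
  have hq := isMonicOfDegree_of_prod_comp_eq hn hζ ⟨rfl, minpoly.monic hy⟩ h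
  refine minpoly_eq_of_monic_of_natDegree_le hq.monic ?_ (hq.natDegree_eq.trans hdeg.symm).le
  rw [← expand_aeval]
  exact (minpoly.dvd_iff).mp (dvd_expand_of_prod_comp_eq hn.pos (minpoly.monic hy) h)

end Minpoly

section AdjoinTrace

variable {F K : Type*} [Field F] [Field K] [Algebra F K] {y : K}

/-- The trace `Tr_{F(y)/F}(y)`, whose nonvanishing propagates along the Cantor tower. Like
`Algebra.trace`, it is `0` when `y` is not algebraic over `F`. -/
noncomputable def adjoinTrace (F : Type*) {K : Type*} [Field F] [Field K] [Algebra F K] (y : K) :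
    F :=
  Algebra.trace F F⟮y⟯ (AdjoinSimple.gen F y)

theorem trace_mk_eq_adjoinTrace {E : IntermediateField F K} (hy : y ∈ E) (hE : E = F⟮y⟯) :
    Algebra.trace F E ⟨y, hy⟩ = adjoinTrace F y := by
  subst hE
  rfl

theorem isIntegral_of_adjoinTrace_ne_zero (h : adjoinTrace F y ≠ 0) : IsIntegral F y :=
  not_imp_comm.mp AdjoinSimple.trace_gen_eq_zero h

theorem ne_zero_of_adjoinTrace_ne_zero (h : adjoinTrace F y ≠ 0) : y ≠ 0 := by
  rintro rfl
  have hgen : AdjoinSimple.gen F (0 : K) = 0 := rfl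
  simp [adjoinTrace, hgen] at h

end AdjoinTrace

section FiniteBaseField

variable {F : Type*} [Field F] [Fintype F]

local notation "q" => Fintype.card F

theorem sum_pow_card_sub_one : ∑ a : F, a ^ (q - 1) = -1 := by
  classical
  have hterm (a : F) : a ^ (q - 1) = 1 - if a = 0 then 1 else 0 := by
    split_ifs with ha
    · simp [ha, Nat.sub_ne_zero_of_lt Fintype.one_lt_card]
    · simp [FiniteField.pow_card_sub_one_eq_one a ha]
  simp [hterm]

theorem sum_add_algebraMap_pow_card_sub_one {A : Type*} [CommRing A] [Algebra F A] (x : A) :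
    ∑ a : F, (x + algebraMap F A a) ^ (q - 1) = -1 := by
  have hsum (j : ℕ) (c d : A) : ∑ a : F, algebraMap F A a ^ j * c * d =
      algebraMap F A (∑ a : F, a ^ j) * c * d := by
    simp [Finset.sum_mul]
  simp_rw [add_comm x, add_pow]
  rw [Finset.sum_comm]
  simp_rw [hsum]
  rw [Finset.sum_range_succ, Finset.sum_eq_zero fun j hj ↦ by
    rw [FiniteField.sum_pow_lt_card_sub_one F j (Finset.mem_range.mp hj)]; simp]
  simp [sum_pow_card_sub_one]

theorem sum_add_algebraMap_pow_two_mul_card_sub_one {A : Type*} [CommRing A] [Algebra F A]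
    (hF : 2 < q) (x : A) :
    ∑ a : F, (x + algebraMap F A a) ^ (2 * q - 1) = -(x ^ q - x) := by
  have hexpand (y : A) : y ^ (2 * q - 1) = y ^ q + (y ^ q - y) * y ^ (q - 1) := by
    obtain ⟨n, hn⟩ : ∃ n, q = n + 1 := Nat.exists_eq_succ_of_ne_zero (by omega)
    rw [hn, show 2 * (n + 1) - 1 = 2 * n + 1 by omega, Nat.add_sub_cancel]
    ring
  have hfrob (a : F) : (x + algebraMap F A a) ^ q = x ^ q + algebraMap F A a := by
    simpa using map_add (FiniteField.frobeniusAlgHom F A) x (algebraMap F A a)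
  have hq : (q : A) = 0 := by
    rw [← map_natCast (algebraMap F A), FiniteField.cast_card_eq_zero, map_zero]
  have hid : ∑ a : F, algebraMap F A a = 0 := by
    have hsum := FiniteField.sum_pow_lt_card_sub_one F 1 (by omega)
    simp_rw [pow_one] at hsum
    rw [← map_sum, hsum, map_zero]
  simp_rw [hexpand, hfrob, add_sub_add_right_eq_sub, Finset.sum_add_distrib, ← Finset.mul_sum,
    sum_add_algebraMap_pow_card_sub_one, hid]
  simp [hq]

variable {K : Type*} [Field K] [Algebra F K]

local notation "φ" => FiniteField.frobeniusAlgHom F K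

theorem frobeniusAlgHom_pow_apply (k : ℕ) (y : K) : (φ ^ k) y = y ^ q ^ k := by
  rw [AlgHom.coe_pow, FiniteField.coe_frobeniusAlgHom, pow_iterate]

theorem frobeniusAlgHom_pow_apply_eq_self_iff {y : K} {k : ℕ} :
    (φ ^ k) y = y ↔ (minpoly F y).natDegree ∣ k := by
  have haeval : aeval y (X ^ q ^ k - X : F[X]) = (φ ^ k) y - y := by
    rw [frobeniusAlgHom_pow_apply, map_sub, map_pow, aeval_X]
  by_cases hy : IsIntegral F y
  · rw [(minpoly.irreducible hy).natDegree_dvd_iff_dvd_X_pow_card_pow_sub_X, minpoly.dvd_iff,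
      Nat.card_eq_fintype_card, haeval, sub_eq_zero]
  · rw [minpoly.eq_zero hy, natDegree_zero, zero_dvd_iff]
    refine ⟨fun hk ↦ by_contra fun hk0 ↦ hy ⟨X ^ q ^ k - X, monic_X_pow_sub ?_, ?_⟩,
      fun hk ↦ by simp [hk]⟩
    · rw [degree_X]
      exact_mod_cast Nat.one_lt_pow hk0 (Fintype.one_lt_card (α := F))
    · rw [← aeval_def, haeval, hk, sub_self]

theorem algebraMap_adjoinTrace_eq_sum (y : K) :
    algebraMap F K (adjoinTrace F y) =
      ∑ k ∈ Finset.range (minpoly F y).natDegree, (φ ^ k) y := by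
  by_cases hy : IsIntegral F y
  · have := adjoin.finiteDimensional hy
    have : Finite F⟮y⟯ := Module.finite_of_finite F
    simp_rw [IsScalarTower.algebraMap_apply F F⟮y⟯ K, adjoinTrace,
      FiniteField.algebraMap_trace_eq_sum_pow, adjoin.finrank hy, frobeniusAlgHom_pow_apply]
    simp
  · simp [adjoinTrace, AdjoinSimple.trace_gen_eq_zero hy, minpoly.eq_zero hy]

end FiniteBaseField

section ArtinSchreier

theorem algHom_pow_apply_of_apply_eq_add {R A : Type*} [CommSemiring R] [Semiring A]
    [Algebra R A] {σ : A →ₐ[R] A} {x : A} {c : R} (h : σ x = x + algebraMap R A c) (s : ℕ) :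
    (σ ^ s) x = x + algebraMap R A (s * c) := by
  induction s with
  | zero => simp
  | succ s ih =>
    rw [pow_succ, AlgHom.mul_apply, h, map_add, ih, AlgHom.commutes, add_assoc, ← map_add,
      Nat.cast_succ, add_one_mul]

variable {F K : Type*} [Field F] [Fintype F] [Field K] [Algebra F K] {x γ : K}

local notation "q" => Fintype.card F
local notation "φ" => FiniteField.frobeniusAlgHom F K

theorem frobeniusAlgHom_pow_apply_eq_add_sum (hx : x ^ q - x = γ) (k : ℕ) :
    (φ ^ k) x = x + ∑ j ∈ Finset.range k, (φ ^ j) γ := by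
  have htelescope (j : ℕ) : (φ ^ j) γ = (φ ^ (j + 1)) x - (φ ^ j) x := by
    rw [← hx, map_sub, pow_succ, AlgHom.mul_apply, FiniteField.frobeniusAlgHom_apply]
  simp_rw [htelescope, Finset.sum_range_sub fun j ↦ (φ ^ j) x]
  simp

theorem frobeniusAlgHom_pow_natDegree_mul_apply (hx : x ^ q - x = γ) (s : ℕ) :
    (φ ^ ((minpoly F γ).natDegree * s)) x = x + algebraMap F K (s * adjoinTrace F γ) := by
  rw [pow_mul]
  refine algHom_pow_apply_of_apply_eq_add ?_ s
  rw [frobeniusAlgHom_pow_apply_eq_add_sum hx, algebraMap_adjoinTrace_eq_sum]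

theorem natDegree_minpoly_of_pow_card_sub_eq (p : ℕ) [CharP F p] (hx : x ^ q - x = γ)
    (hγ : adjoinTrace F γ ≠ 0) :
    (minpoly F x).natDegree = (minpoly F γ).natDegree * p := by
  refine Nat.dvd_right_iff_eq.mp fun k ↦ ?_
  rw [← frobeniusAlgHom_pow_apply_eq_self_iff]
  constructor
  · intro hk
    obtain ⟨t, rfl⟩ : (minpoly F γ).natDegree ∣ k := by
      rw [← frobeniusAlgHom_pow_apply_eq_self_iff, ← hx, map_sub, map_pow, hk]
    rw [frobeniusAlgHom_pow_natDegree_mul_apply hx, add_eq_left, map_eq_zero, mul_eq_zero,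
      or_iff_left hγ, CharP.cast_eq_zero_iff F p] at hk
    exact mul_dvd_mul_left _ hk
  · rintro ⟨t, rfl⟩
    rw [mul_assoc, frobeniusAlgHom_pow_natDegree_mul_apply hx]
    simp

end ArtinSchreier

section CantorTower

variable {p : ℕ} [Fact p.Prime] {K : Type*} [Field K] [Algebra (ZMod p) K] {x γ : K}

local notation "φ" => FiniteField.frobeniusAlgHom (ZMod p) K

theorem natDegree_minpoly_of_pow_sub_eq (hx : x ^ p - x = γ) (hγ : adjoinTrace (ZMod p) γ ≠ 0) :
    (minpoly (ZMod p) x).natDegree = (minpoly (ZMod p) γ).natDegree * p :=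
  natDegree_minpoly_of_pow_card_sub_eq p (by rwa [ZMod.card]) hγ

theorem minpoly_eq_comp_X_pow_sub_X (hx : x ^ p - x = γ) (hγ : adjoinTrace (ZMod p) γ ≠ 0) :
    minpoly (ZMod p) x = (minpoly (ZMod p) γ).comp (X ^ p - X) := by
  have hp : 1 < p := (Fact.out : p.Prime).one_lt
  have hXp : IsMonicOfDegree (X ^ p - X : (ZMod p)[X]) p :=
    (isMonicOfDegree_X_pow _ p).sub (by rwa [natDegree_X])
  have hcomp := IsMonicOfDegree.comp (by omega)
    ⟨rfl, minpoly.monic (isIntegral_of_adjoinTrace_ne_zero hγ)⟩ hXp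
  refine minpoly_eq_of_monic_of_natDegree_le hcomp.monic ?_ ?_
  · simp [aeval_comp, hx]
  · rw [hcomp.natDegree_eq, natDegree_minpoly_of_pow_sub_eq hx hγ]

/-- The powers of Frobenius in this sum run over the automorphisms of `F_p(x)` over `F_p(γ)`. -/
theorem sum_frobeniusAlgHom_pow_natDegree_mul_apply (hp : p ≠ 2) (hx : x ^ p - x = γ)
    (hγ : adjoinTrace (ZMod p) γ ≠ 0) :
    ∑ s ∈ Finset.range p, (φ ^ ((minpoly (ZMod p) γ).natDegree * s)) (x ^ (2 * p - 1)) = -γ := by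
  have hp2 : 2 < p := (Fact.out : p.Prime).two_le.lt_of_ne' hp
  set T := adjoinTrace (ZMod p) γ
  have hconj (s : ℕ) : (φ ^ ((minpoly (ZMod p) γ).natDegree * s)) x =
      x + algebraMap (ZMod p) K (s * T) :=
    frobeniusAlgHom_pow_natDegree_mul_apply (by rwa [ZMod.card]) s
  simp_rw [map_pow, hconj]
  calc ∑ s ∈ Finset.range p, (x + algebraMap (ZMod p) K (s * T)) ^ (2 * p - 1)
    _ = ∑ a : ZMod p, (x + algebraMap (ZMod p) K (a * T)) ^ (2 * p - 1) := by
      refine Finset.sum_nbij' (fun s ↦ (s : ZMod p)) ZMod.val ?_ ?_ ?_ ?_ ?_ <;>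
        simp +contextual [ZMod.val_lt, ZMod.val_natCast, Nat.mod_eq_of_lt]
    _ = ∑ a : ZMod p, (x + algebraMap (ZMod p) K a) ^ (2 * p - 1) :=
      Fintype.sum_equiv (Equiv.mulRight₀ T hγ) _ _ fun _ ↦ rfl
    _ = -(x ^ p - x) := by
      simpa only [ZMod.card] using
        sum_add_algebraMap_pow_two_mul_card_sub_one (F := ZMod p) (by rwa [ZMod.card]) x
    _ = -γ := by rw [hx]

theorem natDegree_minpoly_dvd_natDegree_minpoly_pow (hp : p ≠ 2) (hx : x ^ p - x = γ)
    (hγ : adjoinTrace (ZMod p) γ ≠ 0) :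
    (minpoly (ZMod p) γ).natDegree ∣ (minpoly (ZMod p) (x ^ (2 * p - 1))).natDegree := by
  rw [← frobeniusAlgHom_pow_apply_eq_self_iff, ← neg_inj, ← map_neg,
    ← sum_frobeniusAlgHom_pow_natDegree_mul_apply hp hx hγ, map_sum]
  refine Finset.sum_congr rfl fun s _ ↦ ?_
  rw [← AlgHom.mul_apply, (Commute.pow_pow_self _ _ _).eq, AlgHom.mul_apply,
    frobeniusAlgHom_pow_apply_eq_self_iff.mpr dvd_rfl]

theorem natDegree_minpoly_pow_ne_natDegree_minpoly (hp : p ≠ 2) (hx : x ^ p - x = γ)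
    (hγ : adjoinTrace (ZMod p) γ ≠ 0) :
    (minpoly (ZMod p) (x ^ (2 * p - 1))).natDegree ≠ (minpoly (ZMod p) γ).natDegree := by
  intro heq
  have hfixed (s : ℕ) :
      (φ ^ ((minpoly (ZMod p) γ).natDegree * s)) (x ^ (2 * p - 1)) = x ^ (2 * p - 1) :=
    frobeniusAlgHom_pow_apply_eq_self_iff.mpr (heq ▸ dvd_mul_right _ s)
  have hp0 : (p : K) = 0 := by
    rw [← map_natCast (algebraMap (ZMod p) K), CharP.cast_eq_zero, map_zero]
  have hsum := sum_frobeniusAlgHom_pow_natDegree_mul_apply hp hx hγ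
  simp_rw [hfixed, Finset.sum_const, Finset.card_range, nsmul_eq_mul, hp0, zero_mul] at hsum
  exact ne_zero_of_adjoinTrace_ne_zero hγ (neg_eq_zero.mp hsum.symm)

theorem natDegree_minpoly_pow_two_mul_sub_one (hp : p ≠ 2) (hx : x ^ p - x = γ)
    (hγ : adjoinTrace (ZMod p) γ ≠ 0) :
    (minpoly (ZMod p) (x ^ (2 * p - 1))).natDegree = (minpoly (ZMod p) x).natDegree := by
  have hdvd : (minpoly (ZMod p) (x ^ (2 * p - 1))).natDegree ∣ (minpoly (ZMod p) x).natDegree := by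
    rw [← frobeniusAlgHom_pow_apply_eq_self_iff, map_pow,
      frobeniusAlgHom_pow_apply_eq_self_iff.mpr dvd_rfl]
  obtain ⟨t, ht⟩ := natDegree_minpoly_dvd_natDegree_minpoly_pow hp hx hγ
  have hpos : 0 < (minpoly (ZMod p) γ).natDegree :=
    minpoly.natDegree_pos (isIntegral_of_adjoinTrace_ne_zero hγ)
  have hne := natDegree_minpoly_pow_ne_natDegree_minpoly hp hx hγ
  rw [natDegree_minpoly_of_pow_sub_eq hx hγ] at hdvd ⊢
  rw [ht] at hdvd hne ⊢
  obtain rfl | rfl := (Nat.dvd_prime Fact.out).mp (Nat.dvd_of_mul_dvd_mul_left hpos hdvd)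
  · exact absurd (mul_one _) hne
  · rfl

theorem adjoinTrace_pow_two_mul_sub_one (hp : p ≠ 2) (hx : x ^ p - x = γ)
    (hγ : adjoinTrace (ZMod p) γ ≠ 0) :
    adjoinTrace (ZMod p) (x ^ (2 * p - 1)) = -adjoinTrace (ZMod p) γ := by
  apply (algebraMap (ZMod p) K).injective
  rw [map_neg, algebraMap_adjoinTrace_eq_sum, algebraMap_adjoinTrace_eq_sum,
    natDegree_minpoly_pow_two_mul_sub_one hp hx hγ, natDegree_minpoly_of_pow_sub_eq hx hγ,
    sum_range_mul_eq_sum_sum]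
  simp_rw [pow_add, AlgHom.mul_apply, ← map_sum,
    sum_frobeniusAlgHom_pow_natDegree_mul_apply hp hx hγ, map_neg]
  exact Finset.sum_neg_distrib _

theorem adjoinTrace_pow_sub_ne_zero_of_tower (hp : p ≠ 2) {x : ℕ → K}
    (h0 : adjoinTrace (ZMod p) (x 0) ≠ 0) (hx1 : x 1 ^ p - x 1 = x 0)
    (hxi : ∀ i, 1 ≤ i → x (i + 1) ^ p - x (i + 1) = x i ^ (2 * p - 1)) {i : ℕ} (hi : 1 ≤ i) :
    adjoinTrace (ZMod p) (x i ^ p - x i) ≠ 0 := by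
  induction i, hi using Nat.le_induction with
  | base => rwa [hx1]
  | succ i hi ih =>
    rw [hxi i hi, adjoinTrace_pow_two_mul_sub_one hp rfl ih]
    exact neg_ne_zero.mpr ih

theorem cantor_tower_minpoly_step_general (hp : p ≠ 2) {A : Type*} [CommRing A] [Nontrivial A]
    [Algebra (ZMod p) A] {ζ : A} (hζ : ζ ^ (2 * p - 1) = 1) {x : ℕ → K}
    (h0 : adjoinTrace (ZMod p) (x 0) ≠ 0) (hx1 : x 1 ^ p - x 1 = x 0)
    (hxi : ∀ i, 1 ≤ i → x (i + 1) ^ p - x (i + 1) = x i ^ (2 * p - 1)) {i : ℕ} (hi : 1 ≤ i)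
    {q : (ZMod p)[X]}
    (hq : ∏ j ∈ Finset.range (2 * p - 1),
        ((minpoly (ZMod p) (x i)).map (algebraMap (ZMod p) A)).comp (C (ζ ^ j) * X) =
      (q.map (algebraMap (ZMod p) A)).comp (X ^ (2 * p - 1))) :
    minpoly (ZMod p) (x (i + 1)) = q.comp (X ^ p - X) := by
  have hpos : 0 < p := (Fact.out : p.Prime).pos
  have hodd : Odd (2 * p - 1) := ⟨p - 1, by omega⟩
  have htr {k : ℕ} (hk : 1 ≤ k) := adjoinTrace_pow_sub_ne_zero_of_tower hp h0 hx1 hxi hk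
  have hint : IsIntegral (ZMod p) (x i ^ (2 * p - 1)) := by
    rw [← hxi i hi]
    exact isIntegral_of_adjoinTrace_ne_zero (htr (by omega))
  rw [minpoly_eq_comp_X_pow_sub_X (hxi i hi) (hxi i hi ▸ htr (by omega)),
    minpoly_pow_eq_of_prod_comp_eq hodd hζ (hint.of_pow hodd.pos)
      (natDegree_minpoly_pow_two_mul_sub_one hp rfl (htr hi)) hq]

end CantorTower

/-- In the Cantor tower over `F_p` with `p` odd, let `i ≥ 1`, let
`Q_i ∈ F_p[Y]` be the minimal polynomial of `x_i` over `F_p`, and let `q_i* ∈ F_p[Y]` be such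
that `∏_{j=0}^{2p−2} Q_i(x^j · Y) = q_i*(Y^(2p−1))` in `A[Y]`, where
`A = F_p[X]/(Φ_{2p−1} mod p)` and `x = X mod Φ`. Then the minimal polynomial of `x_{i+1}`
over `F_p` is `q_i*(Y^p − Y)`. -/
theorem cantor_tower_minpoly_step
    (p d : ℕ) [Fact p.Prime] (hodd : p ≠ 2) (hd : 1 ≤ d)
    (Ω : Type*) [Field Ω] [Algebra (ZMod p) Ω] [IsAlgClosure (ZMod p) Ω]
    (x : ℕ → Ω)
    (U : ℕ → IntermediateField (ZMod p) Ω)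
    (hU : ∀ i, U i = IntermediateField.adjoin (ZMod p) (x '' Set.Iic i))
    (hdeg : Module.finrank (ZMod p) ↥(U 0) = d)
    (hx0 : x 0 ∈ U 0)
    (htr0 : Algebra.trace (ZMod p) ↥(U 0) ⟨x 0, hx0⟩ ≠ 0)
    (hx1 : x 1 ^ p - x 1 = x 0)
    (hxi : ∀ i, 1 ≤ i → x (i + 1) ^ p - x (i + 1) = x i ^ (2 * p - 1))
    (i : ℕ) (hi : 1 ≤ i)
    (qstar : Polynomial (ZMod p))
    (hqstar : (∏ j ∈ Finset.range (2 * p - 1),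
        ((minpoly (ZMod p) (x i)).map
            (algebraMap (ZMod p) (AdjoinRoot (cyclotomic (2 * p - 1) (ZMod p))))).comp
          (C ((AdjoinRoot.root (cyclotomic (2 * p - 1) (ZMod p))) ^ j) * X)) =
      (qstar.map
          (algebraMap (ZMod p) (AdjoinRoot (cyclotomic (2 * p - 1) (ZMod p))))).comp
        (X ^ (2 * p - 1))) :
    minpoly (ZMod p) (x (i + 1)) = qstar.comp (X ^ p - X) := by
  have hpos : 0 < 2 * p - 1 := by have := (Fact.out : p.Prime).pos; omega
  have := AdjoinRoot.nontrivial (cyclotomic (2 * p - 1) (ZMod p))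
    (degree_cyclotomic_pos _ _ hpos).ne'
  have hU0 : U 0 = (ZMod p)⟮x 0⟯ := by
    rw [hU, show Set.Iic 0 = {0} from Set.Iic_bot, Set.image_singleton]
  exact cantor_tower_minpoly_step_general hodd (root_cyclotomic_pow_eq_one _ _)
    (trace_mk_eq_adjoinTrace hx0 hU0 ▸ htr0) hx1 hxi hi hqstar
end

section
/- In the Cantor tower over F_p with p odd, set q = p^d = |U_0|. Then for every i ≥ 1 the element γ_i = x_i^{2p−1} is normal over U_0: the family of Galois conjugates (γ_i^{q^j})_{0 ≤ j < p^i} is a basis of U_i as a vector space over U_0. -/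
open IntermediateField

set_option synthInstance.maxHeartbeats 1000000

/-!
Let `K = 𝔽_q` have characteristic `p`, and let `Φ` be the `q`-power Frobenius of an extension of
`K`. If `Φ ^ p ^ n` fixes `y`, then `(X - 1) ^ p ^ n = X ^ p ^ n - 1` annihilates `y`, so the
annihilator of `y` in `K[X]` is generated by a power of `X - 1`. As
`(X - 1) ^ (p ^ n - 1) = 1 + X + ⋯ + X ^ (p ^ n - 1)`, a nonzero trace of `y` rules out every
smaller power, and the `p ^ n` conjugates of `y` are linearly independent.

It remains to find the trace of `γ i` over the bottom field. Frobenius at level `i` moves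
`x (i + 1)` by an element of `𝔽_p` that is the full trace of `γ i`. When this is nonzero, the
conjugates of `x (i + 1)` are its translates by `𝔽_p`, and the power sums over `𝔽_p` give
`γ (i + 1)` the relative trace `-(x (i + 1) ^ p - x (i + 1)) = -γ i`. By induction `γ i` has trace
`(-1) ^ i * γ 0`.
-/

section Orbits

open Polynomial Finset

theorem prime_pow_succ_dvd_of_smul_eq_zero {R M : Type*} [CommRing R] [IsDomain R]
    [IsPrincipalIdealRing R] [AddCommGroup M] [Module R M] {π r : R} (hπ : Prime π) {n : ℕ} {y : M}
    (hzero : π ^ (n + 1) • y = 0) (hne : π ^ n • y ≠ 0) (hr : r • y = 0) : π ^ (n + 1) ∣ r := by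
  set a := Submodule.IsPrincipal.generator (Ideal.torsionOf R M y)
  have smul_eq_zero_iff (s : R) : s • y = 0 ↔ a ∣ s := by
    rw [← Ideal.mem_torsionOf_iff, Submodule.IsPrincipal.mem_iff_generator_dvd]
  obtain ⟨m, hm, ham⟩ := (dvd_prime_pow hπ _).1 ((smul_eq_zero_iff _).1 hzero)
  have hnm : n < m := by
    by_contra! hmn
    exact hne ((smul_eq_zero_iff _).2 (ham.dvd.trans (pow_dvd_pow π hmn)))
  rw [show n + 1 = m by omega]
  exact ham.symm.dvd.trans ((smul_eq_zero_iff r).1 hr)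

theorem linearIndependent_pow_apply_of_forall_dvd {R M : Type*} [CommRing R] [AddCommGroup M]
    [Module R M] {f : Module.End R M} {y : M} {q : R[X]} (hmonic : q.Monic)
    (hq : ∀ P : R[X], aeval f P y = 0 → q ∣ P) :
    LinearIndependent R fun j : Fin q.natDegree => (f ^ (j : ℕ)) y := by
  rw [Fintype.linearIndependent_iff]
  intro c hc j
  set P : R[X] := ∑ i : Fin q.natDegree, C (c i) * X ^ (i : ℕ) with hP
  have hP0 : P = 0 := by
    have hdvd : q ∣ P := hq P (by simpa [hP, map_sum, LinearMap.sum_apply] using hc)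
    by_contra hne
    exact hmonic.not_dvd_of_natDegree_lt hne
      ((natDegree_lt_iff_degree_lt hne).2 (degree_sum_fin_lt c)) hdvd
  have hcoeff : P.coeff j = c j := by simp [hP, coeff_X_pow, Fin.val_inj]
  rw [← hcoeff, hP0, coeff_zero]

theorem sum_range_char_pow_X_pow (p : ℕ) [Fact p.Prime] (R : Type*) [CommRing R] [CharP R p]
    (n : ℕ) : ∑ j ∈ range (p ^ n), (X : R[X]) ^ j = (X - 1) ^ (p ^ n - 1) := by
  apply (monic_X_sub_C (1 : R)).isRegular.right
  simp only [C_1]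
  rw [geom_sum_mul, ← pow_succ, Nat.sub_add_cancel (Nat.one_le_pow _ _ (Fact.out : p.Prime).pos),
    sub_pow_char_pow, one_pow]

theorem linearIndependent_pow_apply_of_sum_ne_zero (p : ℕ) [Fact p.Prime] {K V : Type*} [Field K]
    [CharP K p] [AddCommGroup V] [Module K V] {f : Module.End K V} {n : ℕ} {y : V}
    (hfix : (f ^ p ^ n) y = y) (hsum : ∑ j ∈ range (p ^ n), (f ^ j) y ≠ 0) :
    LinearIndependent K fun j : Fin (p ^ n) => (f ^ (j : ℕ)) y := by
  have hpos : p ^ n - 1 + 1 = p ^ n :=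
    Nat.sub_add_cancel (Nat.one_le_pow _ _ (Fact.out : p.Prime).pos)
  have hprime : Prime (X - 1 : K[X]) := prime_X_sub_C 1
  have hzero : aeval f ((X - 1 : K[X]) ^ p ^ n) y = 0 := by
    simp [sub_pow_char_pow, hfix]
  have hne : aeval f ((X - 1 : K[X]) ^ (p ^ n - 1)) y ≠ 0 := by
    simpa [← sum_range_char_pow_X_pow p, LinearMap.sum_apply] using hsum
  have hdeg : ((X - 1 : K[X]) ^ p ^ n).natDegree = p ^ n := by
    rw [natDegree_pow, ← C_1, natDegree_X_sub_C, mul_one]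
  have hdvd (P : K[X]) (hP : aeval f P y = 0) : (X - 1) ^ p ^ n ∣ P := by
    rw [← hpos] at hzero ⊢
    exact prime_pow_succ_dvd_of_smul_eq_zero (M := Module.AEval' f) (y := Module.AEval'.of f y)
      hprime hzero hne hP
  have hli := linearIndependent_pow_apply_of_forall_dvd ((monic_X_sub_C (1 : K)).pow (p ^ n)) hdvd
  rwa [C_1, hdeg] at hli

end Orbits

section FrobeniusTrace

open Finset

/-- `g + g ^ q + ⋯ + g ^ q ^ (n - 1)`, the trace from `𝔽_{q ^ n}` to `𝔽_q` written as a sum of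
powers. It makes sense for every `g`, so that traces in a tower can be computed before the degrees
are known. -/
def frobeniusTrace {R : Type*} [CommSemiring R] (q n : ℕ) (g : R) : R :=
  ∑ j ∈ range n, g ^ q ^ j

theorem map_frobeniusTrace {R S : Type*} [CommSemiring R] [CommSemiring S] (φ : R →+* S) (q n : ℕ)
    (g : R) : φ (frobeniusTrace q n g) = frobeniusTrace q n (φ g) := by
  simp [frobeniusTrace]

theorem frobeniusTrace_succ {R : Type*} [CommSemiring R] (q n : ℕ) (g : R) :
    frobeniusTrace q (n + 1) g = frobeniusTrace q n g + g ^ q ^ n :=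
  sum_range_succ _ n

theorem frobeniusTrace_mul_of_pow_eq_self {R : Type*} [CommSemiring R] {q : ℕ} {a : R}
    (ha : a ^ q = a) (n : ℕ) (g : R) :
    frobeniusTrace q n (a * g) = a * frobeniusTrace q n g := by
  have hfix (j : ℕ) : a ^ q ^ j = a := by
    induction j with
    | zero => simp
    | succ j ih => rw [pow_succ, pow_mul, ih, ha]
  simp only [frobeniusTrace, mul_pow, hfix, mul_sum]

section Char

variable (p : ℕ) [Fact p.Prime] {R : Type*} [CommSemiring R] [CharP R p]

theorem frobeniusTrace_mul (r a b : ℕ) (g : R) :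
    frobeniusTrace (p ^ r) (a * b) g =
      frobeniusTrace (p ^ r) a (frobeniusTrace ((p ^ r) ^ a) b g) := by
  have hadd (k : ℕ) (u v : R) : (u + v) ^ (p ^ r) ^ k = u ^ (p ^ r) ^ k + v ^ (p ^ r) ^ k := by
    rw [← pow_mul p, add_pow_char_pow]
  induction b with
  | zero => simp [frobeniusTrace, (Fact.out : p.Prime).ne_zero]
  | succ b ih =>
    rw [Nat.mul_succ, frobeniusTrace, sum_range_add, ← frobeniusTrace, ih, frobeniusTrace_succ]
    simp_rw [frobeniusTrace, hadd, sum_add_distrib, ← pow_mul g, ← pow_mul _ a, ← pow_add]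

theorem pow_pow_eq_add_frobeniusTrace {r : ℕ} {z g : R} (h : z ^ p ^ r = z + g) (n : ℕ) :
    z ^ (p ^ r) ^ n = z + frobeniusTrace (p ^ r) n g := by
  induction n with
  | zero => simp [frobeniusTrace]
  | succ n ih =>
    rw [pow_succ', pow_mul, h, ← pow_mul, add_pow_char_pow, pow_mul, ih, frobeniusTrace_succ,
      add_assoc]

end Char

end FrobeniusTrace

section PowerSums

open Polynomial Finset

variable {K L : Type*} [Field K] [Fintype K]

theorem sum_pow_card_sub_one_s17 : ∑ c : K, c ^ (Fintype.card K - 1) = -1 := by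
  classical
  have hpow (c : K) : c ^ (Fintype.card K - 1) = 1 - if c = 0 then 1 else 0 := by
    split_ifs with hc
    · rw [hc, zero_pow (Nat.sub_ne_zero_of_lt Fintype.one_lt_card), sub_self]
    · rw [FiniteField.pow_card_sub_one_eq_one c hc, sub_zero]
  simp [hpow]

variable [CommRing L] [Algebra K L]

theorem sum_eval_algebraMap {P : L[X]} (hP : P.natDegree < Fintype.card K) :
    ∑ c : K, P.eval (algebraMap K L c) = -P.coeff (Fintype.card K - 1) := by
  have hpow (i : ℕ) (hi : i ∈ range (Fintype.card K - 1)) :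
      P.coeff i * algebraMap K L (∑ c : K, c ^ i) = 0 := by
    rw [FiniteField.sum_pow_lt_card_sub_one K i (mem_range.1 hi), map_zero, mul_zero]
  simp_rw [eval_eq_sum_range' hP]
  rw [sum_comm]
  simp_rw [← map_pow, ← mul_sum, ← map_sum]
  rw [← Nat.sub_add_cancel (Fintype.card_pos (α := K)), sum_range_succ, sum_eq_zero hpow,
    Nat.add_sub_cancel, sum_pow_card_sub_one_s17]
  simp

theorem sum_add_algebraMap_pow_card_sub_one_s17 (z : L) :
    ∑ c : K, (z + algebraMap K L c) ^ (Fintype.card K - 1) = -1 := by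
  nontriviality L
  have hdeg : ((X + C z) ^ (Fintype.card K - 1)).natDegree = Fintype.card K - 1 :=
    natDegree_pow_X_add_C _ z
  have hsum := sum_eval_algebraMap (K := K) (P := (X + C z) ^ (Fintype.card K - 1))
    (by rw [hdeg]; exact Nat.sub_lt Fintype.card_pos one_pos)
  rw [coeff_X_add_C_pow] at hsum
  simpa [add_comm z] using hsum

theorem sum_add_algebraMap_pow_two_mul_card_sub_one_s17 (hK : Fintype.card K ≠ 2) (z : L) :
    ∑ c : K, (z + algebraMap K L c) ^ (2 * Fintype.card K - 1) = -(z ^ Fintype.card K - z) := by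
  set q := Fintype.card K with hq
  have hq1 : 1 < q := Fintype.one_lt_card
  have hpow (c : K) : (z + algebraMap K L c) ^ q = z ^ q + algebraMap K L c := by
    rw [← FiniteField.frobeniusAlgHom_apply K L, map_add, AlgHom.commutes]
    rfl
  -- `y = z + c` satisfies `y ^ q = y + (z ^ q - z)`, where `z ^ q - z` does not depend on `c`.
  have hsplit (c : K) : (z + algebraMap K L c) ^ (2 * q - 1) =
      z ^ q + algebraMap K L c + (z ^ q - z) * (z + algebraMap K L c) ^ (q - 1) := by
    set y := z + algebraMap K L c with hy
    have hyq : y * y ^ (q - 1) = z ^ q + algebraMap K L c := by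
      rw [← pow_succ', Nat.sub_add_cancel hq1.le, hpow]
    rw [show 2 * q - 1 = q + (q - 1) by omega, pow_add, hpow]
    linear_combination hyq - y ^ (q - 1) * hy
  have hsum : ∑ c : K, c = 0 := by
    simpa using FiniteField.sum_pow_lt_card_sub_one K 1 (by omega)
  have hcard : (q : L) = 0 := by
    rw [← map_natCast (algebraMap K L), FiniteField.cast_card_eq_zero, map_zero]
  simp_rw [hsplit]
  rw [sum_add_distrib, sum_add_distrib, ← mul_sum, ← map_sum, hsum,
    sum_add_algebraMap_pow_card_sub_one_s17]
  simp [← hq, hcard]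

end PowerSums

section ArtinSchreier

open Finset

variable {p : ℕ} [Fact p.Prime]

theorem sum_range_natCast_mul {M : Type*} [AddCommMonoid M] {e : ZMod p} (he : e ≠ 0)
    (f : ZMod p → M) : ∑ k ∈ range p, f (k * e) = ∑ c : ZMod p, f c := by
  rw [← Equiv.sum_comp (Equiv.mulRight₀ e he) f]
  exact sum_nbij' (fun k => (k : ZMod p)) ZMod.val (by simp) (by simp [ZMod.val_lt])
    (fun k hk => ZMod.val_cast_of_lt (mem_range.1 hk)) (by simp) (by simp)

variable {R : Type*} [CommRing R] [CharP R p] [Algebra (ZMod p) R]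

theorem pow_pow_eq_add_algebraMap_natCast_mul {z : R} {e : ZMod p} {r : ℕ}
    (h : z ^ p ^ r = z + algebraMap (ZMod p) R e) (k : ℕ) :
    z ^ (p ^ r) ^ k = z + algebraMap (ZMod p) R (k * e) := by
  rw [pow_pow_eq_add_frobeniusTrace p h]
  simp [frobeniusTrace, ← map_pow, ← pow_mul p, ZMod.pow_card_pow]

theorem frobeniusTrace_pow_two_mul_sub_one (hp : p ≠ 2) {z : R} {e : ZMod p} (he : e ≠ 0) {r : ℕ}
    (h : z ^ p ^ r = z + algebraMap (ZMod p) R e) :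
    frobeniusTrace (p ^ r) p (z ^ (2 * p - 1)) = -(z ^ p - z) := by
  have hsum := sum_add_algebraMap_pow_two_mul_card_sub_one_s17 (K := ZMod p) (by rwa [ZMod.card]) z
  rw [ZMod.card] at hsum
  rw [← hsum, ← sum_range_natCast_mul he]
  refine sum_congr rfl fun k _ => ?_
  rw [pow_right_comm, pow_pow_eq_add_algebraMap_natCast_mul h]

end ArtinSchreier

theorem pow_pow_eq_self_of_dvd {M : Type*} [Monoid M] {z : M} {q m n : ℕ} (h : z ^ q ^ m = z)
    (hmn : m ∣ n) : z ^ q ^ n = z := by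
  have hper : Function.IsPeriodicPt (· ^ q) m z := by
    rwa [Function.IsPeriodicPt, Function.IsFixedPt, pow_iterate]
  simpa only [Function.IsPeriodicPt, Function.IsFixedPt, pow_iterate] using hper.trans_dvd hmn

/-- The recursion defining the generators `x` of a Cantor tower in characteristic `p`, together with
the right-hand sides `γ` of its Artin–Schreier equations. The trace condition on `x 0`, which makes
every layer of degree `p`, is kept separate. -/
structure IsCantorTower (p : ℕ) {R : Type*} [CommRing R] (x γ : ℕ → R) : Prop where
  gamma_zero : γ 0 = x 0
  gamma_succ (i : ℕ) : γ (i + 1) = x (i + 1) ^ (2 * p - 1)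
  artinSchreier (i : ℕ) : x (i + 1) ^ p - x (i + 1) = γ i

namespace IsCantorTower

variable {p d : ℕ} [Fact p.Prime] {R : Type*} [CommRing R] [CharP R p] [Algebra (ZMod p) R]
  {x γ : ℕ → R} {c : ZMod p}

theorem pow_eq_add_of_frobeniusTrace_eq (hT : IsCantorTower p x γ) (hp : p ≠ 2)
    (htr : frobeniusTrace p d (γ 0) = algebraMap (ZMod p) R c) {i : ℕ}
    (hi : frobeniusTrace (p ^ d) (p ^ i) (γ i) = (-1) ^ i * γ 0) :
    x (i + 1) ^ p ^ (d * p ^ i) = x (i + 1) + algebraMap (ZMod p) R ((-1) ^ i * c) := by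
  have hstep : x (i + 1) ^ p ^ 1 = x (i + 1) + γ i := by
    rw [pow_one, ← hT.artinSchreier, add_sub_cancel]
  have hsign : ((-1 : R) ^ i) ^ p = (-1) ^ i := by
    rw [pow_right_comm, ((Fact.out : p.Prime).odd_of_ne_two hp).neg_one_pow]
  calc x (i + 1) ^ p ^ (d * p ^ i)
      = x (i + 1) + frobeniusTrace p (d * p ^ i) (γ i) := by
        simpa using pow_pow_eq_add_frobeniusTrace p hstep (d * p ^ i)
    _ = x (i + 1) + frobeniusTrace p d ((-1) ^ i * γ 0) := by
        simpa [hi] using frobeniusTrace_mul p 1 d (p ^ i) (γ i)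
    _ = x (i + 1) + algebraMap (ZMod p) R ((-1) ^ i * c) := by
        rw [frobeniusTrace_mul_of_pow_eq_self hsign, htr]
        simp

theorem frobeniusTrace_gamma (hT : IsCantorTower p x γ) (hp : p ≠ 2) (hc : c ≠ 0)
    (htr : frobeniusTrace p d (γ 0) = algebraMap (ZMod p) R c) (i : ℕ) :
    frobeniusTrace (p ^ d) (p ^ i) (γ i) = (-1) ^ i * γ 0 := by
  induction i with
  | zero => simp [frobeniusTrace]
  | succ i ih =>
    have hsign : (-1 : R) ^ p ^ d = -1 :=
      (((Fact.out : p.Prime).odd_of_ne_two hp).pow).neg_one_pow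
    have hlayer : frobeniusTrace ((p ^ d) ^ p ^ i) p (γ (i + 1)) = -1 * γ i := by
      rw [hT.gamma_succ, ← hT.artinSchreier, ← pow_mul, neg_one_mul]
      exact frobeniusTrace_pow_two_mul_sub_one hp
        (mul_ne_zero (pow_ne_zero i (neg_ne_zero.2 one_ne_zero)) hc)
        (hT.pow_eq_add_of_frobeniusTrace_eq hp htr ih)
    calc frobeniusTrace (p ^ d) (p ^ (i + 1)) (γ (i + 1))
        = frobeniusTrace (p ^ d) (p ^ i) (-1 * γ i) := by
          rw [pow_succ, frobeniusTrace_mul p, hlayer]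
      _ = (-1) ^ (i + 1) * γ 0 := by
          rw [frobeniusTrace_mul_of_pow_eq_self hsign, ih, pow_succ', mul_assoc]

theorem frobeniusTrace_gamma_ne_zero [Nontrivial R] (hT : IsCantorTower p x γ) (hp : p ≠ 2)
    (hc : c ≠ 0) (htr : frobeniusTrace p d (γ 0) = algebraMap (ZMod p) R c) (i : ℕ) :
    frobeniusTrace (p ^ d) (p ^ i) (γ i) ≠ 0 := by
  have hc' : algebraMap (ZMod p) R c ≠ 0 := by simpa using hc
  rw [hT.frobeniusTrace_gamma hp hc htr, (isUnit_neg_one.pow i).mul_right_eq_zero.ne]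
  intro h0
  simp [← htr, h0, frobeniusTrace, (Fact.out : p.Prime).ne_zero] at hc'

theorem pow_eq_self (hT : IsCantorTower p x γ) (hp : p ≠ 2) (hc : c ≠ 0)
    (htr : frobeniusTrace p d (γ 0) = algebraMap (ZMod p) R c) (hx0 : x 0 ^ p ^ d = x 0) {i j : ℕ}
    (hij : i ≤ j) : x i ^ p ^ (d * p ^ j) = x i := by
  suffices h : x i ^ p ^ (d * p ^ i) = x i from
    pow_pow_eq_self_of_dvd h (mul_dvd_mul_left d (pow_dvd_pow p hij))
  cases i with
  | zero => simpa using hx0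
  | succ i =>
    have h := hT.pow_eq_add_of_frobeniusTrace_eq hp htr (hT.frobeniusTrace_gamma hp hc htr i)
    rw [pow_succ, ← mul_assoc, pow_mul p, pow_pow_eq_add_algebraMap_natCast_mul h]
    simp

end IsCantorTower

section FiniteFields

open Polynomial

theorem frobeniusAlgHom_pow_apply_s17 (K : Type*) {L : Type*} [Field K] [Fintype K] [CommRing L]
    [Algebra K L] (n : ℕ) (z : L) :
    (FiniteField.frobeniusAlgHom K L ^ n) z = z ^ Fintype.card K ^ n := by
  rw [AlgHom.coe_pow, FiniteField.coe_frobeniusAlgHom, pow_iterate]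

theorem pow_card_pow_eq_self_of_mem_adjoin {K L : Type*} [Field K] [Fintype K] [Field L]
    [Algebra K L] {s : Set L} {n : ℕ} (hs : ∀ z ∈ s, z ^ Fintype.card K ^ n = z) {y : L}
    (hy : y ∈ IntermediateField.adjoin K s) : y ^ Fintype.card K ^ n = y := by
  have hfrob : (FiniteField.frobeniusAlgHom K L ^ n).comp (IntermediateField.adjoin K s).val =
      (IntermediateField.adjoin K s).val :=
    IntermediateField.adjoin_algHom_ext K fun z hz =>
      (frobeniusAlgHom_pow_apply_s17 K n z).trans (hs z hz)
  rw [← frobeniusAlgHom_pow_apply_s17]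
  exact DFunLike.congr_fun hfrob ⟨y, hy⟩

theorem finite_of_forall_pow_eq_self {A : Type*} [CommRing A] [IsDomain A] {m : ℕ} (hm : 1 < m)
    (h : ∀ z : A, z ^ m = z) : Finite A := by
  have hne : (X ^ m - X : A[X]) ≠ 0 := (monic_X_pow_sub (by simpa using hm)).ne_zero
  exact Set.finite_univ_iff.1 ((finite_setOfPred_isRoot hne).subset fun z _ => by simp [h z])

end FiniteFields

section NormalElements

variable {p : ℕ} [Fact p.Prime] {K E : Type*} [Field K] [Fintype K] [CharP K p] [Field E]
  [Algebra K E] {n : ℕ} {y : E}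

theorem linearIndependent_pow_card_pow (hfix : y ^ Fintype.card K ^ p ^ n = y)
    (htr : frobeniusTrace (Fintype.card K) (p ^ n) y ≠ 0) :
    LinearIndependent K fun j : Fin (p ^ n) => y ^ Fintype.card K ^ (j : ℕ) := by
  let σ : Module.End K E := (FiniteField.frobeniusAlgHom K E).toLinearMap
  have hσ (j : ℕ) (z : E) : (σ ^ j) z = z ^ Fintype.card K ^ j := by
    rw [Module.End.coe_pow, AlgHom.coe_toLinearMap, FiniteField.coe_frobeniusAlgHom, pow_iterate]
  simpa only [hσ] using linearIndependent_pow_apply_of_sum_ne_zero p (f := σ) (n := n) (y := y)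
    (by rwa [hσ]) (by simpa only [hσ, frobeniusTrace] using htr)

theorem finrank_le_of_forall_pow_card_pow_eq_self {m : ℕ} (hm : 0 < m)
    (h : ∀ z : E, z ^ Fintype.card K ^ m = z) : Module.finrank K E ≤ m := by
  have : Finite E :=
    finite_of_forall_pow_eq_self (Nat.one_lt_pow hm.ne' Fintype.one_lt_card) h
  rw [← FiniteField.orderOf_frobeniusAlgHom]
  refine orderOf_le_of_pow_eq_one hm (AlgHom.ext fun z => ?_)
  rw [frobeniusAlgHom_pow_apply_s17, AlgHom.one_apply, h z]

theorem span_range_pow_card_pow_eq_top (hfix : ∀ z : E, z ^ Fintype.card K ^ p ^ n = z)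
    (htr : frobeniusTrace (Fintype.card K) (p ^ n) y ≠ 0) :
    Submodule.span K (Set.range fun j : Fin (p ^ n) => y ^ Fintype.card K ^ (j : ℕ)) = ⊤ := by
  have hpos : 0 < p ^ n := pow_pos (Fact.out : p.Prime).pos n
  have : Finite E :=
    finite_of_forall_pow_eq_self (Nat.one_lt_pow hpos.ne' Fintype.one_lt_card) hfix
  have hli := linearIndependent_pow_card_pow (hfix y) htr
  refine hli.span_eq_top_of_card_eq_finrank' (le_antisymm hli.fintype_card_le_finrank ?_)
  rw [Fintype.card_fin]
  exact finrank_le_of_forall_pow_card_pow_eq_self hpos hfix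

end NormalElements

theorem frobeniusTrace_coe_eq_algebraMap_trace {p : ℕ} [Fact p.Prime] {Ω : Type*} [Field Ω]
    [Algebra (ZMod p) Ω] (K : IntermediateField (ZMod p) Ω) [FiniteDimensional (ZMod p) K] (a : K) :
    frobeniusTrace p (Module.finrank (ZMod p) K) (a : Ω) =
      algebraMap (ZMod p) Ω (Algebra.trace (ZMod p) K a) := by
  have : Finite K := Module.finite_of_finite (ZMod p)
  rw [IsScalarTower.algebraMap_apply (ZMod p) K Ω, FiniteField.algebraMap_trace_eq_sum_pow]
  simp [frobeniusTrace, IntermediateField.algebraMap_apply]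

namespace IsCantorTower

variable {p d i : ℕ} [Fact p.Prime] {Ω : Type*} [Field Ω] [Algebra (ZMod p) Ω] {x γ : ℕ → Ω}
  {K : IntermediateField (ZMod p) Ω}

theorem gamma_mem_adjoin (hT : IsCantorTower p x γ) :
    γ i ∈ IntermediateField.adjoin (ZMod p) (x '' Set.Iic i) := by
  have hx : x i ∈ IntermediateField.adjoin (ZMod p) (x '' Set.Iic i) :=
    IntermediateField.subset_adjoin _ _ ⟨i, Set.self_mem_Iic, rfl⟩
  cases i with
  | zero => rwa [hT.gamma_zero]
  | succ i => exact hT.gamma_succ i ▸ pow_mem hx _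

theorem pow_eq_self_of_mem_sup_adjoin (hT : IsCantorTower p x γ) (hp : p ≠ 2)
    {c : ZMod p} (hc : c ≠ 0) (htr : frobeniusTrace p d (γ 0) = algebraMap (ZMod p) Ω c)
    (hx0 : x 0 ∈ K) (hK : ∀ a ∈ K, a ^ p ^ d = a) {y : Ω}
    (hy : y ∈ K ⊔ IntermediateField.adjoin (ZMod p) (x '' Set.Iic i)) :
    y ^ p ^ (d * p ^ i) = y := by
  have : CharP Ω p := charP_of_injective_algebraMap (algebraMap (ZMod p) Ω).injective p
  rw [← IntermediateField.adjoin_self (ZMod p) K, ← IntermediateField.adjoin_union] at hy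
  have hgen : ∀ z ∈ (K : Set Ω) ∪ x '' Set.Iic i, z ^ p ^ (d * p ^ i) = z := by
    rintro z (hz | ⟨j, hj, rfl⟩)
    · exact pow_pow_eq_self_of_dvd (hK z hz) (dvd_mul_right d _)
    · exact hT.pow_eq_self hp hc htr (hK _ hx0) hj
  have hfix := pow_card_pow_eq_self_of_mem_adjoin (K := ZMod p) (by rwa [ZMod.card]) hy
  rwa [ZMod.card] at hfix

end IsCantorTower

theorem cantor_tower_gamma_normal_over_base_general {p d : ℕ} [Fact p.Prime] (hp : p ≠ 2)
    {Ω : Type*} [Field Ω] [Algebra (ZMod p) Ω] {x γ : ℕ → Ω} (hT : IsCantorTower p x γ)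
    (K : IntermediateField (ZMod p) Ω) [FiniteDimensional (ZMod p) K]
    (hdeg : Module.finrank (ZMod p) K = d) (hx0 : x 0 ∈ K)
    (htr : Algebra.trace (ZMod p) K ⟨x 0, hx0⟩ ≠ 0) {i : ℕ} {E : IntermediateField (ZMod p) Ω}
    (hE : E = K ⊔ IntermediateField.adjoin (ZMod p) (x '' Set.Iic i)) :
    ∃ (hle : K ≤ E) (hmem : ∀ j : Fin (p ^ i), γ i ^ (p ^ d) ^ (j : ℕ) ∈ E),
      letI : Algebra K E := (IntermediateField.inclusion hle).toRingHom.toAlgebra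
      LinearIndependent K
          (fun j : Fin (p ^ i) => (⟨γ i ^ (p ^ d) ^ (j : ℕ), hmem j⟩ : E)) ∧
        Submodule.span K
            (Set.range fun j : Fin (p ^ i) => (⟨γ i ^ (p ^ d) ^ (j : ℕ), hmem j⟩ : E)) = ⊤ := by
  have : CharP Ω p := charP_of_injective_algebraMap (algebraMap (ZMod p) Ω).injective p
  have : CharP K p := charP_of_injective_algebraMap (algebraMap (ZMod p) K).injective p
  have : Finite K := Module.finite_of_finite (ZMod p)
  let : Fintype K := Fintype.ofFinite K
  have hcard : Fintype.card K = p ^ d := by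
    rw [Module.card_eq_pow_finrank (K := ZMod p), ZMod.card, hdeg]
  have hKfix (a : Ω) (ha : a ∈ K) : a ^ p ^ d = a :=
    hcard ▸ congrArg Subtype.val (FiniteField.pow_card (⟨a, ha⟩ : K))
  have htr0 : frobeniusTrace p d (γ 0) =
      algebraMap (ZMod p) Ω (Algebra.trace (ZMod p) K ⟨x 0, hx0⟩) := by
    rw [hT.gamma_zero, ← hdeg, ← frobeniusTrace_coe_eq_algebraMap_trace]
  have hle : K ≤ E := hE ▸ le_sup_left
  have hγ : γ i ∈ E := hE ▸ le_sup_right (a := K) hT.gamma_mem_adjoin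
  refine ⟨hle, fun j => pow_mem hγ _, ?_⟩
  let : Algebra K E := (IntermediateField.inclusion hle).toRingHom.toAlgebra
  have hEfix (y : E) : y ^ Fintype.card K ^ p ^ i = y := by
    rw [hcard, ← pow_mul]
    exact Subtype.ext (hT.pow_eq_self_of_mem_sup_adjoin hp htr htr0 hx0 hKfix (hE ▸ y.2))
  have hγtr : frobeniusTrace (Fintype.card K) (p ^ i) (⟨γ i, hγ⟩ : E) ≠ 0 := by
    rw [hcard, ← map_ne_zero (algebraMap E Ω), map_frobeniusTrace]
    exact hT.frobeniusTrace_gamma_ne_zero hp htr htr0 i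
  have hli := linearIndependent_pow_card_pow (hEfix ⟨γ i, hγ⟩) hγtr
  have hspan := span_range_pow_card_pow_eq_top hEfix hγtr
  rw [hcard] at hli hspan
  exact ⟨hli, hspan⟩

/-- In the Cantor tower over `F_p` with `p` odd, set `q = p^d = |U_0|`.
Then for every `i ≥ 1` the element `γ_i = x_i^(2p−1)` is normal over `U_0`: the family of
Galois conjugates `(γ_i^(q^j))_{0 ≤ j < p^i}` is a basis of `U_i` as a `U_0`-vector space. -/
theorem cantor_tower_gamma_normal_over_base
    (p d : ℕ) [Fact p.Prime] (hodd : p ≠ 2) (hd : 1 ≤ d)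
    (Ω : Type*) [Field Ω] [Algebra (ZMod p) Ω] [IsAlgClosure (ZMod p) Ω]
    (x : ℕ → Ω)
    (U : ℕ → IntermediateField (ZMod p) Ω)
    (hU : ∀ i, U i = IntermediateField.adjoin (ZMod p) (x '' Set.Iic i))
    (hdeg : Module.finrank (ZMod p) ↥(U 0) = d)
    (hx0 : x 0 ∈ U 0)
    (htr0 : Algebra.trace (ZMod p) ↥(U 0) ⟨x 0, hx0⟩ ≠ 0)
    (hx1 : x 1 ^ p - x 1 = x 0)
    (hxi : ∀ i, 1 ≤ i → x (i + 1) ^ p - x (i + 1) = x i ^ (2 * p - 1))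
    (γ : ℕ → Ω) (hγ0 : γ 0 = x 0) (hγ : ∀ i, 1 ≤ i → γ i = x i ^ (2 * p - 1)) :
    ∀ i, 1 ≤ i →
      ∃ (hle : U 0 ≤ U i) (hmem : ∀ j : Fin (p ^ i), γ i ^ (p ^ d) ^ (j : ℕ) ∈ U i),
        letI : Algebra ↥(U 0) ↥(U i) :=
          (IntermediateField.inclusion hle).toRingHom.toAlgebra
        LinearIndependent ↥(U 0)
            (fun j : Fin (p ^ i) => (⟨γ i ^ (p ^ d) ^ (j : ℕ), hmem j⟩ : ↥(U i))) ∧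
          Submodule.span ↥(U 0)
              (Set.range fun j : Fin (p ^ i) =>
                (⟨γ i ^ (p ^ d) ^ (j : ℕ), hmem j⟩ : ↥(U i))) = ⊤ := by
  intro i _
  have : FiniteDimensional (ZMod p) (U 0) := .of_finrank_pos (by omega)
  have hle : U 0 ≤ U i := by
    rw [hU 0, hU i]
    exact adjoin.mono _ _ _ (Set.image_mono (Set.Iic_subset_Iic.2 i.zero_le))
  have hT : IsCantorTower p x γ :=
    { gamma_zero := hγ0
      gamma_succ := fun j => hγ (j + 1) j.succ_pos
      artinSchreier := fun j => by
        cases j with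
        | zero => rw [hx1, hγ0]
        | succ j => rw [hxi _ j.succ_pos, hγ _ j.succ_pos] }
  exact cantor_tower_gamma_normal_over_base_general hodd hT (U 0) hdeg hx0 htr0
    (by rw [← hU i, sup_eq_right.2 hle])
end
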